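/- Let θ ∈ (0,1) and let {U_{𝔾_n}}_{n≥0} be the sequence produced by the adaptive planewave algorithm for the source system: 𝔾_0 = ∅, U_{𝔾_0} = 0; at each step one chooses a symmetric set δ𝔾_n ⊂ ℤ^d \ 𝔾_n with η̄(U_{𝔾_n}; δ𝔾_n) ≥ θ η̄(U_{𝔾_n}), sets 𝔾_{n+1} = 𝔾_n ∪ δ𝔾_n, and lets U_{𝔾_{n+1}} ∈ (V_{𝔾_{n+1}})^N be the Galerkin solution. Then with ρ = ρ(θ) = √(1 − (α_*/α^*) θ²) ∈ (0,1), one has ‖U − U_{𝔾_{n+1}}‖_a ≤ ρ ‖U − U_{𝔾_n}‖_a for all n. -/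

import Mathlib

/-!
Common setup: periodic functions on `Ω = [0,2π)^d` are represented by their Fourier
coefficients `u : (Fin d → ℤ) → ℂ` with respect to the orthonormal basis
`e_G(x) = (2π)^{-d/2} e^{iG·x}` of `L_p^2(Ω)`.
-/

open scoped BigOperators Pointwise Classical

noncomputable section

namespace APW

/-- Frequency indices `G ∈ ℤ^d`. -/
abbrev Idx (d : ℕ) := Fin d → ℤ

/-- A periodic function/distribution, represented by its Fourier coefficients
`û_G = (e_G, u)`. -/
abbrev Coeff (d : ℕ) := Idx d → ℂ

variable {d : ℕ}

/-- `|G|²`, the squared Euclidean norm of a frequency `G ∈ ℤ^d`. -/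
def gnormSq (G : Idx d) : ℝ := ∑ i, ((G i : ℝ)) ^ 2

/-- Squared `H_p^s(Ω)` norm: `Σ_G (1+|G|²)^s |û_G|²`. -/
def hsNormSq (s : ℝ) (u : Coeff d) : ℝ := ∑' G, (1 + gnormSq G) ^ s * ‖u G‖ ^ 2

/-- `H_p^s(Ω)` norm. -/
def hsNorm (s : ℝ) (u : Coeff d) : ℝ := Real.sqrt (hsNormSq s u)

/-- Membership in `H_p^s(Ω)` (real-valued periodic functions:
`û_{-G} = (û_G)^*` and the weighted coefficient series is summable). -/
def memHs (s : ℝ) (u : Coeff d) : Prop :=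
  Summable (fun G : Idx d => (1 + gnormSq G) ^ s * ‖u G‖ ^ 2) ∧
    ∀ G, u (-G) = starRingEnd ℂ (u G)

/-- The `L_p²(Ω)` inner product `(u,v) = Σ_G û_G^* v̂_G`. -/
def l2inner (u v : Coeff d) : ℂ := ∑' G, starRingEnd ℂ (u G) * v G

/-- Squared `L²` norm. -/
def l2NormSq (u : Coeff d) : ℝ := ∑' G, ‖u G‖ ^ 2

/-- `L²` norm. -/
def l2Norm (u : Coeff d) : ℝ := Real.sqrt (l2NormSq u)

/-- The `L²`-orthogonal projection `Π_𝔾` onto `V_𝔾` (truncation of Fourier coefficients). -/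
def proj (𝔾 : Set (Idx d)) (u : Coeff d) : Coeff d := fun G => if G ∈ 𝔾 then u G else 0

/-- The index set `𝔾^M = {G ∈ ℤ^d : |G| ≤ M}`. -/
def ball (d : ℕ) (M : ℝ) : Set (Idx d) := {G | Real.sqrt (gnormSq G) ≤ M}

/-- `V_𝔾 = span{e_G : G ∈ 𝔾}`: coefficient sequences supported in `𝔾`. -/
def pwSpace (𝔾 : Set (Idx d)) : Set (Coeff d) := {u | ∀ G, G ∉ 𝔾 → u G = 0}

/-- Fourier coefficients of the pointwise product `V·u` (a convolution). -/
def mulCoeff (V u : Coeff d) : Coeff d :=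
  fun G => ((Real.sqrt ((2 * Real.pi) ^ d))⁻¹ : ℝ) * ∑' G', V (G - G') * u G'

/-- The bilinear form `a(u,v) = (∇u,∇v) + (Vu,v)`, in Fourier coefficients. -/
def aForm (V u v : Coeff d) : ℂ :=
  (∑' G, (gnormSq G : ℂ) * starRingEnd ℂ (u G) * v G) + l2inner (mulCoeff V u) v

/-- The energy norm `‖u‖_a = √(a(u,u))`. -/
def aNorm (V u : Coeff d) : ℝ := Real.sqrt (aForm V u u).re

/-- The bounds `ν_* ≤ V ≤ ν^*` on the potential, encoded through the quadratic form
`(Vu, u)` of multiplication by `V`. -/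
def PotentialBounds (V : Coeff d) (ν₁ ν₂ : ℝ) : Prop :=
  ∀ u, memHs 0 u →
    ν₁ * l2NormSq u ≤ (l2inner (mulCoeff V u) u).re ∧
      (l2inner (mulCoeff V u) u).re ≤ ν₂ * l2NormSq u

/-- `K : L_p² → H_p¹` is the solution operator: `a(Kw, v) = (w, v)` for all `v ∈ H_p¹`. -/
def IsSolutionOp (V : Coeff d) (K : Coeff d → Coeff d) : Prop :=
  ∀ w, memHs 0 w →
    memHs 1 (K w) ∧ ∀ v, memHs 1 v → aForm V (K w) v = l2inner w v

/-- `P` is the Galerkin projection `P_𝔾 : H_p¹ → V_𝔾`: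
`a(u − P_𝔾 u, v) = 0` for all `v ∈ V_𝔾`. -/
def IsGalerkin (V : Coeff d) (𝔾 : Set (Idx d)) (P : Coeff d → Coeff d) : Prop :=
  ∀ u, memHs 1 u →
    P u ∈ pwSpace 𝔾 ∧ memHs 1 (P u) ∧
      ∀ v ∈ pwSpace 𝔾, memHs 1 v → aForm V (u - P u) v = 0

/-- `ρ_Ω(𝔾) = sup_{‖f‖_{L²}=1} inf_{v ∈ V_𝔾} ‖Kf − v‖_a`. -/
def rho (V : Coeff d) (K : Coeff d → Coeff d) (𝔾 : Set (Idx d)) : ℝ :=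
  ⨆ f : {f : Coeff d // memHs 0 f ∧ l2Norm f = 1},
    ⨅ v : pwSpace 𝔾, aNorm V (K f.1 - v.1)

/-- `ν(𝔾) = sup_{f ∈ H_p¹, ‖f‖_a=1} inf_{v ∈ V_𝔾} ‖Kf − v‖_a`. -/
def nuG (V : Coeff d) (K : Coeff d → Coeff d) (𝔾 : Set (Idx d)) : ℝ :=
  ⨆ f : {f : Coeff d // memHs 1 f ∧ aNorm V f = 1},
    ⨅ v : pwSpace 𝔾, aNorm V (K f.1 - v.1)

/-- The eigenspace `M(λ)` of the eigenvalue problem `a(u,v) = λ(u,v)`. -/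
def eigenspace (V : Coeff d) (lam : ℝ) : Set (Coeff d) :=
  {u | memHs 1 u ∧ ∀ v, memHs 1 v → aForm V u v = (lam : ℂ) * l2inner u v}

/-- `δ_𝔾(λ) = sup_{w ∈ M(λ), ‖w‖_a=1} inf_{v ∈ V_𝔾} ‖w − v‖_a`. -/
def deltaG (V : Coeff d) (𝔾 : Set (Idx d)) (lam : ℝ) : ℝ :=
  ⨆ w : {w : Coeff d // w ∈ eigenspace V lam ∧ aNorm V w = 1},
    ⨅ v : pwSpace 𝔾, aNorm V (w.1 - v.1)

/-- A discrete eigenpair of the planewave discretization in `V_𝔾`. -/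
def IsDiscreteEigenpair (V : Coeff d) (𝔾 : Set (Idx d)) (lam : ℝ) (u : Coeff d) : Prop :=
  u ∈ pwSpace 𝔾 ∧ memHs 1 u ∧
    ∀ v ∈ pwSpace 𝔾, memHs 1 v → aForm V u v = (lam : ℂ) * l2inner u v

/-- The spectral projection `E_𝔾(λ) = (2πi)^{-1}∮_Γ (z − K_𝔾)^{-1} dz` associated with
`K_𝔾` and the discrete invariant subspace `S = M_𝔾(λ)`, characterized algebraically:
a linear idempotent commuting with `K_𝔾` whose range is `S`. -/
def IsSpecProj (KG E : Coeff d → Coeff d) (S : Set (Coeff d)) : Prop :=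
  (∀ u v, E (u + v) = E u + E v) ∧ (∀ (c : ℂ) (u), E (c • u) = c • E u) ∧
    (∀ u, E (E u) = E u) ∧ (∀ u, E u ∈ S) ∧ (∀ u ∈ S, E u = u) ∧
      ∀ u, E (KG u) = KG (E u)

/-- Residual of an approximate eigenpair: `r(w) = λw + Δw − Vw`. -/
def residual (V : Coeff d) (lam : ℝ) (w : Coeff d) : Coeff d :=
  fun G => (lam : ℂ) * w G - (gnormSq G : ℂ) * w G - mulCoeff V w G

/-- Residual of the source problem: `r̄(w) = f − Lw = f + Δw − Vw`. -/
def rbar (V f w : Coeff d) : Coeff d :=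
  fun G => f G - ((gnormSq G : ℂ) * w G + mulCoeff V w G)

/-- A posteriori estimator `η(r; 𝔾*) = ‖Π_{𝔾*} r‖_{H_p^{-1}}`. -/
def eta (𝔾s : Set (Idx d)) (r : Coeff d) : ℝ := hsNorm (-1) (proj 𝔾s r)

/-- Energy norm of an `N`-tuple. -/
def aNormT {N : ℕ} (V : Coeff d) (U : Fin N → Coeff d) : ℝ :=
  Real.sqrt (∑ i, (aNorm V (U i)) ^ 2)

/-- The subspace distance `d_{H_p¹(Ω)}(X,Y) = sup_{u∈X,‖u‖_a=1} inf_{v∈Y} ‖u−v‖_a`. -/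
def dSub (V : Coeff d) (X Y : Set (Coeff d)) : ℝ :=
  ⨆ u : {u : Coeff d // u ∈ X ∧ aNorm V u = 1}, ⨅ v : Y, aNorm V (u.1 - v.1)

/-- The symmetric subspace distance `δ_{H_p¹(Ω)}(X,Y)`. -/
def deltaSub (V : Coeff d) (X Y : Set (Coeff d)) : ℝ :=
  max (dSub V X Y) (dSub V Y X)

/-!
Galerkin orthogonality gives `‖u - w‖_a² = ‖u - w'‖_a² + ‖w' - w‖_a²` for consecutive iterates
`w`, `w'`, so it suffices to bound the increment `‖w' - w‖_a` below by a fixed fraction of the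
error. Since `r̄(w) = L(u - w)`, coercivity bounds the error above by the dual norm of the
residual, the marking strategy passes from the full residual to its marked part, and testing the
equation for `w' - w` with the Riesz representative in `H_p^1` of the marked part bounds the latter
by the increment. Planewaves are orthogonal in every `H_p^s`, so this representative lies in the
new planewave space and no inverse estimate is lost; the symmetry of the marked set makes it a real
function.

Multiplication by `V` is a convolution of Fourier coefficients. For `σ > d/2` the coefficients of
`V` are absolutely summable, so Young's inequality makes it bounded on `L_p²`, and all double series
converge absolutely.
-/

section CauchySchwarz

variable {ι : Type*} {r f g : ι → ℝ}

lemma summable_of_sq_le_mul (hf : ∀ i, 0 ≤ f i) (hg : ∀ i, 0 ≤ g i)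
    (hr : ∀ i, r i ^ 2 ≤ f i * g i) (hfs : Summable f) (hgs : Summable g) : Summable r := by
  refine .of_norm_bounded (hfs.add hgs) fun i => abs_le_of_sq_le_sq ?_ (add_nonneg (hf i) (hg i))
  nlinarith [hr i, mul_nonneg (hf i) (hg i), sq_nonneg (f i), sq_nonneg (g i)]

lemma sq_tsum_le_tsum_mul_tsum_of_sq_le_mul (hf : ∀ i, 0 ≤ f i) (hg : ∀ i, 0 ≤ g i)
    (hr : ∀ i, r i ^ 2 ≤ f i * g i) (hfs : Summable f) (hgs : Summable g) :
    (∑' i, r i) ^ 2 ≤ (∑' i, f i) * ∑' i, g i := by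
  have hrs := (summable_of_sq_le_mul hf hg hr hfs hgs).hasSum
  exact le_of_tendsto_of_tendsto' (Filter.Tendsto.pow hrs 2)
    (Filter.Tendsto.mul hfs.hasSum hgs.hasSum) fun s =>
      s.sum_sq_le_sum_mul_sum_of_sq_le_mul (fun i _ => hf i) (fun i _ => hg i) fun i _ => hr i

end CauchySchwarz

lemma le_of_mul_self_le_mul {x y : ℝ} (hy : 0 ≤ y) (h : x * x ≤ y * x) : x ≤ y := by
  by_contra! hxy
  exact h.not_gt (mul_lt_mul_of_pos_right hxy (hy.trans_lt hxy))

lemma sqrt_one_sub_mem_Ioo {x : ℝ} (hx : x ∈ Set.Ioo (0 : ℝ) 1) :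
    √(1 - x) ∈ Set.Ioo (0 : ℝ) 1 :=
  ⟨Real.sqrt_pos.mpr (by linarith [hx.2]), (Real.sqrt_lt' one_pos).mpr (by linarith [hx.1])⟩

section Convolution

variable {Γ E F R : Type*} [AddGroup Γ] [SeminormedAddCommGroup E] [SeminormedAddCommGroup F]
  [NormedRing R]

lemma summable_sub_mul {f g : Γ → ℝ} (hf : Summable f) (hg : Summable g) :
    Summable fun p : Γ × Γ => f (p.1 - p.2) * g p.2 := by
  have hgf : Summable fun p : Γ × Γ => g p.1 * f (p.2 - p.1) :=
    ((Equiv.refl Γ).prodShear fun y => Equiv.subRight y).summable_iff.mpr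
      (summable_mul_of_summable_norm hg.norm hf.norm)
  simpa only [mul_comm, Prod.fst_swap, Prod.snd_swap] using hgf.prod_symm

lemma summable_norm_sub_mul_norm {K : Γ → E} {u : Γ → F} (hK : Summable fun x => ‖K x‖)
    (hu : Summable fun x => ‖u x‖ ^ 2) (x : Γ) : Summable fun y => ‖K (x - y)‖ * ‖u y‖ := by
  have hrow : Summable fun y => ‖K (x - y)‖ := (Equiv.subLeft x).summable_iff.mpr hK
  exact summable_of_sq_le_mul (fun _ => by positivity) (fun _ => by positivity)
    (fun _ => le_of_eq (by ring)) hrow ((summable_sub_mul hK hu).prod_factor x)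

lemma summable_norm_sub_mul_norm_mul_norm {K : Γ → E} {u v : Γ → F}
    (hK : Summable fun x => ‖K x‖) (hu : Summable fun x => ‖u x‖ ^ 2)
    (hv : Summable fun x => ‖v x‖ ^ 2) :
    Summable fun p : Γ × Γ => ‖K (p.1 - p.2)‖ * (‖u p.2‖ * ‖v p.1‖) := by
  have hKneg : Summable fun x => ‖K (-x)‖ := (Equiv.neg Γ).summable_iff.mpr hK
  have hKv : Summable fun p : Γ × Γ => ‖K (p.1 - p.2)‖ * ‖v p.1‖ ^ 2 :=
    (summable_sub_mul hKneg hv).prod_symm.congr fun p => by simp only [Prod.swap, neg_sub]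
  exact summable_of_sq_le_mul (fun _ => by positivity) (fun _ => by positivity)
    (fun _ => le_of_eq (by ring)) (summable_sub_mul hK hu) hKv

variable {K u : Γ → R}

lemma summable_convolution [CompleteSpace R] (hK : Summable fun x => ‖K x‖)
    (hu : Summable fun x => ‖u x‖ ^ 2) (x : Γ) : Summable fun y => K (x - y) * u y :=
  .of_norm_bounded (summable_norm_sub_mul_norm hK hu x) fun _ => norm_mul_le _ _

lemma sq_norm_convolution_le (hK : Summable fun x => ‖K x‖)
    (hu : Summable fun x => ‖u x‖ ^ 2) (x : Γ) :
    ‖∑' y, K (x - y) * u y‖ ^ 2 ≤ (∑' y, ‖K y‖) * ∑' y, ‖K (x - y)‖ * ‖u y‖ ^ 2 := by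
  have hnorm : ‖∑' y, K (x - y) * u y‖ ≤ ∑' y, ‖K (x - y)‖ * ‖u y‖ :=
    tsum_of_norm_bounded (summable_norm_sub_mul_norm hK hu x).hasSum fun _ => norm_mul_le _ _
  calc ‖∑' y, K (x - y) * u y‖ ^ 2 ≤ (∑' y, ‖K (x - y)‖ * ‖u y‖) ^ 2 := by gcongr
    _ ≤ (∑' y, ‖K (x - y)‖) * ∑' y, ‖K (x - y)‖ * ‖u y‖ ^ 2 :=
      sq_tsum_le_tsum_mul_tsum_of_sq_le_mul (fun _ => by positivity) (fun _ => by positivity)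
        (fun _ => le_of_eq (by ring)) ((Equiv.subLeft x).summable_iff.mpr hK)
        ((summable_sub_mul hK hu).prod_factor x)
    _ = _ := by rw [← (Equiv.subLeft x).tsum_eq fun y => ‖K y‖]; rfl

lemma summable_sq_norm_convolution (hK : Summable fun x => ‖K x‖)
    (hu : Summable fun x => ‖u x‖ ^ 2) :
    Summable fun x => ‖∑' y, K (x - y) * u y‖ ^ 2 :=
  .of_nonneg_of_le (fun _ => by positivity) (sq_norm_convolution_le hK hu)
    ((summable_sub_mul hK hu).prod.mul_left _)

end Convolution

section Weight

lemma gnormSq_nonneg (G : Idx d) : 0 ≤ gnormSq G := Finset.sum_nonneg fun _ _ => sq_nonneg _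

lemma gnormSq_pos {G : Idx d} (hG : G ≠ 0) : 0 < gnormSq G := by
  obtain ⟨i, hi⟩ := Function.ne_iff.mp hG
  have hGi : (G i : ℝ) ≠ 0 := by exact_mod_cast hi
  exact Finset.sum_pos' (fun _ _ => sq_nonneg _) ⟨i, Finset.mem_univ i, by positivity⟩

lemma gnormSq_neg (G : Idx d) : gnormSq (-G) = gnormSq G := by simp [gnormSq]

lemma one_le_one_add_gnormSq (G : Idx d) : 1 ≤ 1 + gnormSq G := by linarith [gnormSq_nonneg G]

lemma one_add_gnormSq_pos (G : Idx d) : 0 < 1 + gnormSq G :=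
  one_pos.trans_le (one_le_one_add_gnormSq G)

lemma one_add_gnormSq_rpow_pos (s : ℝ) (G : Idx d) : 0 < (1 + gnormSq G) ^ s :=
  Real.rpow_pos_of_pos (one_add_gnormSq_pos G) s

lemma weighted_sq_nonneg (s : ℝ) (u : Coeff d) (G : Idx d) :
    0 ≤ (1 + gnormSq G) ^ s * ‖u G‖ ^ 2 :=
  mul_nonneg (one_add_gnormSq_rpow_pos s G).le (sq_nonneg _)

lemma one_add_gnormSq_rpow_neg_mul_rpow (s : ℝ) (G : Idx d) :
    (1 + gnormSq G) ^ (-s) * (1 + gnormSq G) ^ s = 1 := by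
  rw [← Real.rpow_add (one_add_gnormSq_pos G), neg_add_cancel, Real.rpow_zero]

lemma summable_gnormSq_rpow {r : ℝ} (hr : r < -(d / 2 : ℝ)) :
    Summable fun G : Idx d => gnormSq G ^ r := by
  let b := (EuclideanSpace.basisFun (Fin d) ℝ).toBasis
  let e := (b.restrictScalars ℤ).equivFun.symm
  have he (G : Idx d) : (e G : EuclideanSpace ℝ (Fin d)) = WithLp.toLp 2 fun i => (G i : ℝ) := by
    simp only [e, Module.Basis.equivFun_symm_apply, Submodule.coe_sum, Submodule.coe_smul,
      Module.Basis.restrictScalars_apply, b]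
    ext i
    simp [Pi.single_apply]
  have hnorm (G : Idx d) : ‖e G‖ ^ (2 : ℝ) = gnormSq G := by
    rw [Real.rpow_two, Submodule.coe_norm, he, EuclideanSpace.norm_sq_eq]
    simp [gnormSq]
  have hrank : 2 * r < -Module.finrank ℤ (Submodule.span ℤ (Set.range b)) := by
    rw [ZLattice.rank ℝ, finrank_euclideanSpace_fin]
    linarith
  refine (e.toEquiv.summable_iff.mpr (ZLattice.summable_norm_rpow _ _ hrank)).congr fun G => ?_
  rw [Function.comp_apply, Real.rpow_mul (norm_nonneg _)]
  exact congrArg (· ^ r) (hnorm G)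

lemma summable_one_add_gnormSq_rpow {r : ℝ} (hr : r < -(d / 2 : ℝ)) :
    Summable fun G : Idx d => (1 + gnormSq G) ^ r := by
  have hr0 : r ≤ 0 := hr.le.trans (neg_nonpos.mpr (by positivity))
  refine .of_norm_bounded_eventually (summable_gnormSq_rpow hr) ?_
  filter_upwards [(Set.finite_singleton (0 : Idx d)).compl_mem_cofinite] with G hG
  rw [Real.norm_of_nonneg (one_add_gnormSq_rpow_pos r G).le]
  exact Real.rpow_le_rpow_of_nonpos (gnormSq_pos hG) (by linarith) hr0

end Weight

section Sobolev

variable {s t : ℝ} {u v : Coeff d}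

lemma memHs.mono (hst : s ≤ t) (hu : memHs t u) : memHs s u :=
  ⟨.of_nonneg_of_le (weighted_sq_nonneg s u) (fun G => mul_le_mul_of_nonneg_right
    (Real.rpow_le_rpow_of_exponent_le (one_le_one_add_gnormSq G) hst) (sq_nonneg _)) hu.1, hu.2⟩

lemma memHs_zero_iff :
    memHs 0 u ↔ Summable (fun G => ‖u G‖ ^ 2) ∧ ∀ G, u (-G) = starRingEnd ℂ (u G) := by
  simp only [memHs, Real.rpow_zero, one_mul]

lemma memHs.summable_sq (hs : 0 ≤ s) (hu : memHs s u) : Summable fun G => ‖u G‖ ^ 2 :=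
  (memHs_zero_iff.mp (hu.mono hs)).1

lemma memHs.add (hu : memHs s u) (hv : memHs s v) : memHs s (u + v) := by
  refine ⟨.of_nonneg_of_le (weighted_sq_nonneg s _) (fun G => ?_)
    ((hu.1.add hv.1).mul_left 2), fun G => by simp [hu.2, hv.2]⟩
  calc (1 + gnormSq G) ^ s * ‖u G + v G‖ ^ 2
      ≤ (1 + gnormSq G) ^ s * (2 * (‖u G‖ ^ 2 + ‖v G‖ ^ 2)) := by
        gcongr
        · exact (one_add_gnormSq_rpow_pos s G).le
        · exact (pow_le_pow_left₀ (norm_nonneg _) (norm_add_le _ _) 2).trans add_sq_le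
    _ = _ := by ring

lemma memHs.smul (c : ℝ) (hu : memHs s u) : memHs s (c • u) := by
  refine ⟨(hu.1.mul_left (c ^ 2)).congr fun G => ?_, fun G => by simp [hu.2]⟩
  simp only [Pi.smul_apply, norm_smul, mul_pow, Real.norm_eq_abs, sq_abs]
  ring

/-- The Sobolev space `H_p^s(Ω)` as a real vector space of coefficient sequences. -/
def sobolev (d : ℕ) (s : ℝ) : Submodule ℝ (Coeff d) where
  carrier := {u | memHs s u}
  add_mem' := memHs.add
  zero_mem' := ⟨by simp [summable_zero], by simp⟩
  smul_mem' := fun c _ => memHs.smul c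

lemma hsNorm_sq (s : ℝ) (u : Coeff d) :
    hsNorm s u ^ 2 = ∑' G, (1 + gnormSq G) ^ s * ‖u G‖ ^ 2 :=
  Real.sq_sqrt (tsum_nonneg (weighted_sq_nonneg s u))

end Sobolev

section Planewaves

variable {S T : Set (Idx d)} {u v : Coeff d}

lemma memHs_proj {s : ℝ} (hS : S = -S) (hu : memHs s u) : memHs s (proj S u) := by
  refine ⟨.of_nonneg_of_le (weighted_sq_nonneg s _) (fun G => ?_) hu.1, fun G => ?_⟩
  · unfold proj
    split_ifs
    · rfl
    · simpa using weighted_sq_nonneg s u G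
  · have hmem : -G ∈ S ↔ G ∈ S := by rw [← Set.mem_neg, ← hS]
    simp only [proj, hmem, apply_ite (starRingEnd ℂ), hu.2, map_zero]

lemma proj_mem_pwSpace (S : Set (Idx d)) (u : Coeff d) : proj S u ∈ pwSpace S :=
  fun _ hG => if_neg hG

lemma pwSpace_mono (hST : S ⊆ T) : pwSpace S ⊆ pwSpace T :=
  fun _ hu G hG => hu G fun hGS => hG (hST hGS)

lemma sub_mem_pwSpace (hu : u ∈ pwSpace S) (hv : v ∈ pwSpace S) : u - v ∈ pwSpace S :=
  fun G hG => by simp [hu G hG, hv G hG]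

lemma proj_univ (u : Coeff d) : proj Set.univ u = u := by
  ext G
  simp [proj]

end Planewaves

section Duality

variable {s : ℝ} {r u v : Coeff d}

lemma sq_norm_conj_mul_eq (s : ℝ) (r v : Coeff d) (G : Idx d) :
    ‖starRingEnd ℂ (r G) * v G‖ ^ 2 =
      ((1 + gnormSq G) ^ (-s) * ‖r G‖ ^ 2) * ((1 + gnormSq G) ^ s * ‖v G‖ ^ 2) := by
  rw [norm_mul, RCLike.norm_conj, mul_mul_mul_comm, one_add_gnormSq_rpow_neg_mul_rpow, one_mul,
    mul_pow]

lemma summable_conj_mul (hr : memHs (-s) r) (hv : memHs s v) :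
    Summable fun G => starRingEnd ℂ (r G) * v G :=
  .of_norm <| summable_of_sq_le_mul (weighted_sq_nonneg (-s) r) (weighted_sq_nonneg s v)
    (fun G => (sq_norm_conj_mul_eq s r v G).le) hr.1 hv.1

lemma norm_l2inner_sq_le (hr : memHs (-s) r) (hv : memHs s v) :
    ‖l2inner r v‖ ^ 2 ≤ hsNorm (-s) r ^ 2 * hsNorm s v ^ 2 := by
  rw [hsNorm_sq, hsNorm_sq]
  calc ‖l2inner r v‖ ^ 2 ≤ (∑' G, ‖starRingEnd ℂ (r G) * v G‖) ^ 2 := by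
        gcongr
        exact norm_tsum_le_tsum_norm (summable_conj_mul hr hv).norm
    _ ≤ _ := sq_tsum_le_tsum_mul_tsum_of_sq_le_mul (weighted_sq_nonneg (-s) r)
        (weighted_sq_nonneg s v) (fun G => (sq_norm_conj_mul_eq s r v G).le) hr.1 hv.1

/-- The duality pairing of `H_p^{-s}(Ω)` and `H_p^s(Ω)` extending the `L_p²` inner product.
For real functions `l2inner` is real, so taking the real part loses nothing. -/
def dualityPairing (d : ℕ) (s : ℝ) : sobolev d (-s) →ₗ[ℝ] sobolev d s →ₗ[ℝ] ℝ :=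
  LinearMap.mk₂ ℝ (fun r v => (l2inner (r : Coeff d) v).re)
    (fun r r' v => by
      rw [← Complex.add_re, l2inner, l2inner, l2inner,
        ← (summable_conj_mul r.2 v.2).tsum_add (summable_conj_mul r'.2 v.2)]
      simp [add_mul])
    (fun c r v => by simp [l2inner, mul_assoc, tsum_mul_left])
    (fun r v v' => by
      rw [← Complex.add_re, l2inner, l2inner, l2inner,
        ← (summable_conj_mul r.2 v.2).tsum_add (summable_conj_mul r.2 v'.2)]
      simp [mul_add])
    (fun c r v => by simp [l2inner, mul_left_comm, tsum_mul_left])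

lemma dualityPairing_apply (r : sobolev d (-s)) (v : sobolev d s) :
    dualityPairing d s r v = (l2inner (r : Coeff d) v).re := rfl

lemma dualityPairing_sq_le (r : sobolev d (-s)) (v : sobolev d s) :
    dualityPairing d s r v ^ 2 ≤ hsNorm (-s) (r : Coeff d) ^ 2 * hsNorm s (v : Coeff d) ^ 2 :=
  (sq_le_sq.mpr ((Complex.abs_re_le_norm _).trans (le_abs_self _))).trans
    (norm_l2inner_sq_le r.2 v.2)

/-- The Bessel potential `(1 - Δ)^s`. With `s = -1` it is the Riesz map from `H_p^{-1}(Ω)` to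
`H_p^1(Ω)`. -/
def besselPotential (s : ℝ) (u : Coeff d) : Coeff d := fun G => ((1 + gnormSq G) ^ s : ℝ) * u G

lemma weighted_sq_besselPotential (s t : ℝ) (u : Coeff d) (G : Idx d) :
    (1 + gnormSq G) ^ t * ‖besselPotential s u G‖ ^ 2 =
      (1 + gnormSq G) ^ (t + 2 * s) * ‖u G‖ ^ 2 := by
  rw [besselPotential, norm_mul, Complex.norm_real,
    Real.norm_of_nonneg (one_add_gnormSq_rpow_pos s G).le, mul_pow, ← mul_assoc,
    Real.rpow_add (one_add_gnormSq_pos G), two_mul s, Real.rpow_add (one_add_gnormSq_pos G), sq]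

lemma memHs_besselPotential {s t : ℝ} (hu : memHs (t + 2 * s) u) :
    memHs t (besselPotential s u) :=
  ⟨hu.1.congr fun G => (weighted_sq_besselPotential s t u G).symm, fun G => by
    simp only [besselPotential, gnormSq_neg, hu.2, map_mul, Complex.conj_ofReal]⟩

lemma hsNorm_besselPotential (s t : ℝ) (u : Coeff d) :
    hsNorm t (besselPotential s u) = hsNorm (t + 2 * s) u := by
  simp only [hsNorm, hsNormSq, weighted_sq_besselPotential]

lemma besselPotential_mem_pwSpace {S : Set (Idx d)} (s : ℝ) (hu : u ∈ pwSpace S) :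
    besselPotential s u ∈ pwSpace S := fun G hG => by simp [besselPotential, hu G hG]

lemma l2inner_besselPotential_proj (s : ℝ) (S : Set (Idx d)) (r : Coeff d) :
    l2inner r (besselPotential s (proj S r)) = (hsNorm s (proj S r) ^ 2 : ℝ) := by
  rw [hsNorm_sq, Complex.ofReal_tsum]
  refine tsum_congr fun G => ?_
  unfold besselPotential proj
  split_ifs
  · rw [mul_left_comm, Complex.conj_mul']
    push_cast
    rfl
  · simp

end Duality

section Multiplication

/-- A real potential with absolutely summable Fourier coefficients (the Wiener algebra). Young's
inequality `ℓ¹ * ℓ² ⊆ ℓ²` then makes multiplication by it a bounded operator on `L_p²(Ω)`. -/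
structure IsWiener (V : Coeff d) : Prop where
  summable_norm : Summable fun G => ‖V G‖
  map_neg : ∀ G, V (-G) = starRingEnd ℂ (V G)

variable {V u v : Coeff d} {s : ℝ}

lemma memHs.isWiener (hs : (d : ℝ) / 2 < s) (hV : memHs s V) : IsWiener V where
  summable_norm := summable_of_sq_le_mul (fun G => (one_add_gnormSq_rpow_pos (-s) G).le)
    (weighted_sq_nonneg s V)
    (fun G => by rw [← mul_assoc, one_add_gnormSq_rpow_neg_mul_rpow, one_mul])
    (summable_one_add_gnormSq_rpow (neg_lt_neg hs)) hV.1
  map_neg := hV.2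

lemma IsWiener.mulCoeff_add (hV : IsWiener V) (hu : memHs 0 u) (hv : memHs 0 v) :
    mulCoeff V (u + v) = mulCoeff V u + mulCoeff V v := by
  ext G
  simp only [mulCoeff, Pi.add_apply, mul_add]
  rw [(summable_convolution hV.summable_norm (hu.summable_sq le_rfl) G).tsum_add
    (summable_convolution hV.summable_norm (hv.summable_sq le_rfl) G), mul_add]

lemma mulCoeff_smul (V : Coeff d) (c : ℝ) (u : Coeff d) :
    mulCoeff V (c • u) = c • mulCoeff V u := by
  ext G
  simp only [mulCoeff, Pi.smul_apply, mul_smul_comm, tsum_const_smul'']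

lemma IsWiener.mulCoeff_neg (hV : IsWiener V) (hu : ∀ G, u (-G) = starRingEnd ℂ (u G))
    (G : Idx d) : mulCoeff V u (-G) = starRingEnd ℂ (mulCoeff V u G) := by
  simp only [mulCoeff, map_mul, Complex.conj_ofReal, Complex.conj_tsum]
  rw [← (Equiv.neg (Idx d)).tsum_eq]
  simp only [Equiv.neg_apply, ← neg_sub', hV.map_neg, hu]

lemma IsWiener.memHs_mulCoeff (hV : IsWiener V) (hu : memHs 0 u) : memHs 0 (mulCoeff V u) := by
  refine memHs_zero_iff.mpr ⟨?_, hV.mulCoeff_neg hu.2⟩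
  simp only [mulCoeff, norm_mul, mul_pow]
  exact (summable_sq_norm_convolution hV.summable_norm (hu.summable_sq le_rfl)).mul_left _

lemma IsWiener.l2inner_mulCoeff_symm (hV : IsWiener V) (hu : memHs 0 u) (hv : memHs 0 v) :
    l2inner (mulCoeff V u) v = starRingEnd ℂ (l2inner (mulCoeff V v) u) := by
  let c : ℝ := (√((2 * Real.pi) ^ d))⁻¹
  let k : Idx d → Idx d → ℂ := fun G G' => starRingEnd ℂ (V (G - G')) * (starRingEnd ℂ (u G') * v G)
  have hk : Summable (Function.uncurry k) := .of_norm <|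
    (summable_norm_sub_mul_norm_mul_norm hV.summable_norm (hu.summable_sq le_rfl)
      (hv.summable_sq le_rfl)).congr fun p => by
        simp only [Function.uncurry, k, norm_mul, RCLike.norm_conj]
  have hleft : l2inner (mulCoeff V u) v = c * ∑' G, ∑' G', k G G' := by
    rw [← tsum_mul_left]
    refine tsum_congr fun G => ?_
    simp only [mulCoeff, map_mul, Complex.conj_ofReal, Complex.conj_tsum, mul_assoc,
      ← tsum_mul_right, c, k]
  have hright : starRingEnd ℂ (l2inner (mulCoeff V v) u) = c * ∑' G', ∑' G, k G G' := by
    rw [l2inner, Complex.conj_tsum, ← tsum_mul_left]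
    refine tsum_congr fun G' => ?_
    simp only [mulCoeff, map_mul, Complex.conj_conj, mul_assoc, ← tsum_mul_right, c, k]
    congr 1
    refine tsum_congr fun G => ?_
    rw [← hV.map_neg, neg_sub, mul_comm (v G)]
  rw [hleft, hright, hk.tsum_comm]

end Multiplication

section Energy

variable {V u v : Coeff d} {ν₁ ν₂ : ℝ}

lemma memHs_gnormSq_mul {s : ℝ} (hu : memHs (s + 2) u) :
    memHs s fun G => (gnormSq G : ℂ) * u G := by
  have hbessel : memHs s (besselPotential 1 u) := memHs_besselPotential (by simpa using hu)
  have heq : (fun G => (gnormSq G : ℂ) * u G) = besselPotential 1 u - u := by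
    ext G
    simp only [besselPotential, Real.rpow_one, Pi.sub_apply]
    push_cast
    ring
  rw [heq]
  exact (sobolev d s).sub_mem hbessel (hu.mono (by linarith))

/-- The Schrödinger operator `L = -Δ + V` as a map from `H_p^1(Ω)` to its dual. -/
def schrodingerOp (hV : IsWiener V) : sobolev d 1 →ₗ[ℝ] sobolev d (-1) where
  toFun w := ⟨fun G => (gnormSq G : ℂ) * w.1 G + mulCoeff V w.1 G,
    (memHs_gnormSq_mul (w.2.mono (by norm_num))).add
      ((hV.memHs_mulCoeff (w.2.mono zero_le_one)).mono (by norm_num))⟩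
  map_add' w w' := by
    ext G
    simp [hV.mulCoeff_add (w.2.mono zero_le_one) (w'.2.mono zero_le_one), mul_add,
      add_add_add_comm]
  map_smul' c w := by
    ext G
    simp [mulCoeff_smul, mul_left_comm]

lemma l2inner_schrodingerOp (hV : IsWiener V) (u v : sobolev d 1) :
    l2inner (schrodingerOp hV u : Coeff d) v = aForm V u v := by
  have hlap : memHs (-1) fun G => (gnormSq G : ℂ) * (u : Coeff d) G :=
    memHs_gnormSq_mul (u.2.mono (by norm_num))
  have hmul : memHs (-1) (mulCoeff V u) :=
    (hV.memHs_mulCoeff (u.2.mono zero_le_one)).mono (by norm_num)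
  have hgrad (G : Idx d) : (gnormSq G : ℂ) * starRingEnd ℂ ((u : Coeff d) G) =
      starRingEnd ℂ (gnormSq G * (u : Coeff d) G) := by
    rw [map_mul, Complex.conj_ofReal]
  simp only [aForm, l2inner, hgrad]
  rw [← (summable_conj_mul hlap v.2).tsum_add (summable_conj_mul hmul v.2)]
  simp only [schrodingerOp, LinearMap.coe_mk, AddHom.coe_mk, map_add, add_mul]

lemma aForm_symm (hV : IsWiener V) (hu : memHs 0 u) (hv : memHs 0 v) :
    aForm V u v = starRingEnd ℂ (aForm V v u) := by
  rw [aForm, aForm, map_add, ← hV.l2inner_mulCoeff_symm hu hv, Complex.conj_tsum]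
  congr 1
  refine tsum_congr fun G => ?_
  simp only [map_mul, Complex.conj_ofReal, Complex.conj_conj]
  ring

lemma aForm_self_re (V u : Coeff d) :
    (aForm V u u).re = ∑' G, gnormSq G * ‖u G‖ ^ 2 + (l2inner (mulCoeff V u) u).re := by
  have hgrad (G : Idx d) : (gnormSq G : ℂ) * starRingEnd ℂ (u G) * u G =
      (gnormSq G * ‖u G‖ ^ 2 : ℝ) := by
    rw [mul_assoc, Complex.conj_mul']
    push_cast
    rfl
  simp only [aForm, hgrad, ← Complex.ofReal_tsum, Complex.add_re, Complex.ofReal_re]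

lemma hsNorm_one_sq (hu : memHs 1 u) :
    hsNorm 1 u ^ 2 = l2NormSq u + ∑' G, gnormSq G * ‖u G‖ ^ 2 := by
  have hl2 := hu.summable_sq zero_le_one
  have hsum : Summable fun G => (1 + gnormSq G) * ‖u G‖ ^ 2 := by
    simpa only [Real.rpow_one] using hu.1
  have hgrad : Summable fun G => gnormSq G * ‖u G‖ ^ 2 :=
    (hsum.sub hl2).congr fun G => by ring
  simp only [hsNorm_sq, Real.rpow_one, add_mul, one_mul]
  exact hl2.tsum_add hgrad

lemma PotentialBounds.le_aForm_self (hVb : PotentialBounds V ν₁ ν₂) (hu : memHs 1 u) :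
    min ν₁ 1 * hsNorm 1 u ^ 2 ≤ (aForm V u u).re := by
  rw [aForm_self_re, hsNorm_one_sq hu, mul_add, add_comm]
  have hpot := (hVb u (hu.mono zero_le_one)).1
  have hl2 : 0 ≤ l2NormSq u := tsum_nonneg fun G => sq_nonneg _
  have hgrad : 0 ≤ ∑' G, gnormSq G * ‖u G‖ ^ 2 :=
    tsum_nonneg fun G => mul_nonneg (gnormSq_nonneg G) (sq_nonneg _)
  exact add_le_add (mul_le_of_le_one_left hgrad (min_le_right _ _))
    ((mul_le_mul_of_nonneg_right (min_le_left _ _) hl2).trans hpot)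

lemma PotentialBounds.aForm_self_le (hVb : PotentialBounds V ν₁ ν₂) (hu : memHs 1 u) :
    (aForm V u u).re ≤ max ν₂ 1 * hsNorm 1 u ^ 2 := by
  rw [aForm_self_re, hsNorm_one_sq hu, mul_add, add_comm]
  have hpot := (hVb u (hu.mono zero_le_one)).2
  have hl2 : 0 ≤ l2NormSq u := tsum_nonneg fun G => sq_nonneg _
  have hgrad : 0 ≤ ∑' G, gnormSq G * ‖u G‖ ^ 2 :=
    tsum_nonneg fun G => mul_nonneg (gnormSq_nonneg G) (sq_nonneg _)
  exact add_le_add (hpot.trans (mul_le_mul_of_nonneg_right (le_max_left _ _) hl2))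
    (le_mul_of_one_le_left hgrad (le_max_right _ _))

/-- The energy form `a(·,·)` as a real bilinear form on `H_p^1(Ω)`. -/
def energyForm (hV : IsWiener V) : LinearMap.BilinForm ℝ (sobolev d 1) :=
  (dualityPairing d 1).comp (schrodingerOp hV)

lemma energyForm_apply (hV : IsWiener V) (u v : sobolev d 1) :
    energyForm hV u v = (aForm V u v).re := by
  rw [← l2inner_schrodingerOp hV]
  rfl

lemma energyForm_isSymm (hV : IsWiener V) : (energyForm hV).IsSymm where
  eq u v := by
    rw [energyForm_apply, energyForm_apply, aForm_symm hV (u.2.mono zero_le_one)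
      (v.2.mono zero_le_one), Complex.conj_re]

lemma energyForm_self_nonneg (hV : IsWiener V) (hν₁ : 0 ≤ ν₁) (hVb : PotentialBounds V ν₁ ν₂)
    (u : sobolev d 1) : 0 ≤ energyForm hV u u := by
  rw [energyForm_apply]
  exact (mul_nonneg (le_min hν₁ zero_le_one) (sq_nonneg _)).trans (hVb.le_aForm_self u.2)

lemma aNorm_sq (hV : IsWiener V) (hν₁ : 0 ≤ ν₁) (hVb : PotentialBounds V ν₁ ν₂)
    (u : sobolev d 1) : aNorm V u ^ 2 = energyForm hV u u := by
  have hpos := energyForm_self_nonneg hV hν₁ hVb u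
  rw [energyForm_apply] at hpos ⊢
  exact Real.sq_sqrt hpos

end Energy

section Galerkin

/-- `u ∈ H_p^1(Ω)` solves `a(u,v) = (f,v)` for all `v ∈ H_p^1(Ω)`. -/
def IsWeakSolution (V f u : Coeff d) : Prop :=
  memHs 1 u ∧ ∀ v, memHs 1 v → aForm V u v = l2inner f v

/-- `w ∈ V_𝔾` solves `a(w,v) = (f,v)` for all `v ∈ V_𝔾`; since the planewave space `pwSpace 𝔾`
contains arbitrary sequences supported in `𝔾`, it is intersected with `H_p^1(Ω)`. -/
def IsGalerkinSolution (V : Coeff d) (𝔾 : Set (Idx d)) (f w : Coeff d) : Prop :=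
  w ∈ pwSpace 𝔾 ∧ memHs 1 w ∧ ∀ v ∈ pwSpace 𝔾, memHs 1 v → aForm V w v = l2inner f v

variable {V f u w w' : Coeff d} {ν₁ ν₂ : ℝ} {S T : Set (Idx d)}

lemma energyForm_sub_eq_dualityPairing (hV : IsWiener V) {F : sobolev d (-1)}
    {u φ : sobolev d 1} (hu : aForm V u φ = l2inner (F : Coeff d) φ) (w : sobolev d 1) :
    energyForm hV (u - w) φ = dualityPairing d 1 (F - schrodingerOp hV w) φ := by
  rw [LinearMap.map_sub₂, LinearMap.map_sub₂, energyForm_apply, hu]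
  rfl

lemma coe_sub_schrodingerOp (hV : IsWiener V) (F : sobolev d (-1)) (w : sobolev d 1) :
    ((F - schrodingerOp hV w : sobolev d (-1)) : Coeff d) = rbar V F w := rfl

lemma IsWeakSolution.min_mul_aNorm_sub_sq_le_eta_sq (hu : IsWeakSolution V f u)
    (hV : IsWiener V) (hν₁ : 0 ≤ ν₁) (hVb : PotentialBounds V ν₁ ν₂) (hf : memHs (-1) f)
    (hw : memHs 1 w) :
    min ν₁ 1 * aNorm V (u - w) ^ 2 ≤ eta Set.univ (rbar V f w) ^ 2 := by
  obtain ⟨hu, hsol⟩ := hu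
  lift f to sobolev d (-1) using hf
  lift u to sobolev d 1 using hu
  lift w to sobolev d 1 using hw
  rw [← Submodule.coe_sub, aNorm_sq hV hν₁ hVb, eta, proj_univ]
  have hpair := energyForm_sub_eq_dualityPairing hV (hsol _ (u - w).2) w
  have hcoer := hVb.le_aForm_self (u - w).2
  rw [← energyForm_apply hV] at hcoer
  set E := energyForm hV (u - w) (u - w)
  have hE : E ^ 2 ≤ hsNorm (-1) (rbar V f w) ^ 2 * hsNorm 1 (u - w : sobolev d 1).1 ^ 2 := by
    rw [hpair]
    exact dualityPairing_sq_le _ _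
  have : 0 ≤ min ν₁ 1 := le_min hν₁ zero_le_one
  refine le_of_mul_self_le_mul (sq_nonneg _) ?_
  calc min ν₁ 1 * E * (min ν₁ 1 * E) = min ν₁ 1 * (min ν₁ 1 * E ^ 2) := by ring
    _ ≤ min ν₁ 1 * (min ν₁ 1 * (hsNorm (-1) (rbar V f w) ^ 2 *
          hsNorm 1 (u - w : sobolev d 1).1 ^ 2)) := by gcongr
    _ = min ν₁ 1 * hsNorm (-1) (rbar V f w) ^ 2 *
          (min ν₁ 1 * hsNorm 1 (u - w : sobolev d 1).1 ^ 2) := by ring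
    _ ≤ min ν₁ 1 * hsNorm (-1) (rbar V f w) ^ 2 * E := by gcongr
    _ = _ := by ring

lemma IsGalerkinSolution.eta_sq_le_max_mul_aNorm_sub_sq (hw' : IsGalerkinSolution V T f w')
    (hV : IsWiener V) (hν₁ : 0 ≤ ν₁) (hVb : PotentialBounds V ν₁ ν₂) (hf : memHs (-1) f)
    (hw : memHs 1 w) (hS : S = -S) (hST : S ⊆ T) :
    eta S (rbar V f w) ^ 2 ≤ max ν₂ 1 * aNorm V (w' - w) ^ 2 := by
  obtain ⟨-, hw'1, hsol⟩ := hw'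
  lift f to sobolev d (-1) using hf
  lift w to sobolev d 1 using hw
  lift w' to sobolev d 1 using hw'1
  set r := rbar V f w
  have hrS : memHs (-1) (proj S r) := memHs_proj hS (f - schrodingerOp hV w).2
  let φ : sobolev d 1 := ⟨besselPotential (-1) (proj S r),
    memHs_besselPotential (by norm_num; exact hrS)⟩
  have hφ : (φ : Coeff d) ∈ pwSpace T :=
    besselPotential_mem_pwSpace (-1) (pwSpace_mono hST (proj_mem_pwSpace S r))
  have htest : energyForm hV (w' - w) φ = eta S r ^ 2 := by
    rw [energyForm_sub_eq_dualityPairing hV (hsol φ hφ φ.2), dualityPairing_apply,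
      coe_sub_schrodingerOp, l2inner_besselPotential_proj, Complex.ofReal_re, eta]
  have hφ_energy : energyForm hV φ φ ≤ max ν₂ 1 * eta S r ^ 2 := by
    rw [energyForm_apply, eta]
    convert hVb.aForm_self_le φ.2 using 3
    rw [hsNorm_besselPotential]
    norm_num
  have hE := energyForm_self_nonneg hV hν₁ hVb (w' - w)
  rw [← Submodule.coe_sub, aNorm_sq hV hν₁ hVb]
  refine le_of_mul_self_le_mul (mul_nonneg (zero_le_one.trans (le_max_right _ _)) hE) ?_
  calc eta S r ^ 2 * eta S r ^ 2 = energyForm hV (w' - w) φ ^ 2 := by rw [htest, sq (_ ^ 2)]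
    _ ≤ energyForm hV (w' - w) (w' - w) * energyForm hV φ φ :=
      LinearMap.BilinForm.apply_sq_le_of_symm _ (energyForm_self_nonneg hV hν₁ hVb)
        (LinearMap.BilinForm.isSymm_iff.mp (energyForm_isSymm hV)) _ _
    _ ≤ energyForm hV (w' - w) (w' - w) * (max ν₂ 1 * eta S r ^ 2) := by gcongr
    _ = _ := by ring

lemma IsWeakSolution.aNorm_sub_sq_eq_add (hu : IsWeakSolution V f u)
    (hw' : IsGalerkinSolution V T f w') (hV : IsWiener V) (hν₁ : 0 ≤ ν₁)
    (hVb : PotentialBounds V ν₁ ν₂) (hw : memHs 1 w) (hwT : w ∈ pwSpace T) :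
    aNorm V (u - w) ^ 2 = aNorm V (u - w') ^ 2 + aNorm V (w' - w) ^ 2 := by
  obtain ⟨hu1, husol⟩ := hu
  obtain ⟨hw'T, hw'1, hw'sol⟩ := hw'
  lift u to sobolev d 1 using hu1
  lift w to sobolev d 1 using hw
  lift w' to sobolev d 1 using hw'1
  have horth : energyForm hV (u - w') (w' - w) = 0 := by
    rw [LinearMap.map_sub₂, energyForm_apply, energyForm_apply, husol _ (w' - w).2,
      hw'sol (w' - w : sobolev d 1) (sub_mem_pwSpace hw'T hwT) (w' - w).2, sub_self]
  have horth' : energyForm hV (w' - w) (u - w') = 0 := by rw [(energyForm_isSymm hV).eq, horth]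
  simp only [← Submodule.coe_sub, aNorm_sq hV hν₁ hVb]
  rw [← sub_add_sub_cancel u w' w, map_add, LinearMap.map_add₂, LinearMap.map_add₂, horth, horth',
    add_zero, zero_add]

end Galerkin

section Adaptive

variable {N : ℕ} {V : Coeff d} {ν₁ ν₂ θ : ℝ} {f U W W' : Fin N → Coeff d} {S T : Set (Idx d)}

lemma aNormT_sq (V : Coeff d) (W : Fin N → Coeff d) : aNormT V W ^ 2 = ∑ i, aNorm V (W i) ^ 2 :=
  Real.sq_sqrt (Finset.sum_nonneg fun _ _ => sq_nonneg _)

lemma aNormT_sub_sq_le (hV : IsWiener V) (hν₁ : 0 ≤ ν₁) (hVb : PotentialBounds V ν₁ ν₂)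
    (hf : ∀ i, memHs (-1) (f i)) (hU : ∀ i, IsWeakSolution V (f i) (U i))
    (hW : ∀ i, W i ∈ pwSpace T ∧ memHs 1 (W i)) (hW' : ∀ i, IsGalerkinSolution V T (f i) (W' i))
    (hS : S = -S) (hST : S ⊆ T) (hθ : 0 ≤ θ)
    (hmark : θ * √(∑ i, eta Set.univ (rbar V (f i) (W i)) ^ 2) ≤
      √(∑ i, eta S (rbar V (f i) (W i)) ^ 2)) :
    aNormT V (U - W') ^ 2 ≤ (1 - min ν₁ 1 / max ν₂ 1 * θ ^ 2) * aNormT V (U - W) ^ 2 := by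
  have hpyth : aNormT V (U - W) ^ 2 = aNormT V (U - W') ^ 2 + aNormT V (W' - W) ^ 2 := by
    simp only [aNormT_sq, ← Finset.sum_add_distrib]
    exact Finset.sum_congr rfl fun i _ =>
      (hU i).aNorm_sub_sq_eq_add (hW' i) hV hν₁ hVb (hW i).2 (hW i).1
  have hmax : 0 < max ν₂ 1 := lt_max_of_lt_right one_pos
  have hchain : θ ^ 2 * (min ν₁ 1 * aNormT V (U - W) ^ 2) ≤
      max ν₂ 1 * aNormT V (W' - W) ^ 2 := by
    calc θ ^ 2 * (min ν₁ 1 * aNormT V (U - W) ^ 2)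
        ≤ θ ^ 2 * ∑ i, eta Set.univ (rbar V (f i) (W i)) ^ 2 := by
          rw [aNormT_sq, Finset.mul_sum]
          gcongr with i
          exact (hU i).min_mul_aNorm_sub_sq_le_eta_sq hV hν₁ hVb (hf i) (hW i).2
      _ ≤ ∑ i, eta S (rbar V (f i) (W i)) ^ 2 := by
          rwa [← Real.sqrt_le_sqrt_iff (by positivity), Real.sqrt_mul (sq_nonneg θ),
            Real.sqrt_sq hθ]
      _ ≤ max ν₂ 1 * aNormT V (W' - W) ^ 2 := by
          rw [aNormT_sq, Finset.mul_sum]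
          gcongr with i
          exact (hW' i).eta_sq_le_max_mul_aNorm_sub_sq hV hν₁ hVb (hf i) (hW i).2 hS hST
  have hdecay : min ν₁ 1 / max ν₂ 1 * θ ^ 2 * aNormT V (U - W) ^ 2 ≤ aNormT V (W' - W) ^ 2 := by
    rw [div_mul_eq_mul_div, div_mul_eq_mul_div, div_le_iff₀' hmax]
    linarith
  linarith

lemma min_div_max_mul_sq_mem_Ioo (hν₁ : 0 < ν₁) (ν₂ : ℝ) (hθ : θ ∈ Set.Ioo (0 : ℝ) 1) :
    min ν₁ 1 / max ν₂ 1 * θ ^ 2 ∈ Set.Ioo (0 : ℝ) 1 := by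
  have hmax : 0 < max ν₂ 1 := lt_max_of_lt_right one_pos
  have hratio : 0 < min ν₁ 1 / max ν₂ 1 := div_pos (lt_min hν₁ one_pos) hmax
  have hratio_le : min ν₁ 1 / max ν₂ 1 ≤ 1 :=
    (div_le_one hmax).mpr ((min_le_right _ _).trans (le_max_right _ _))
  exact ⟨mul_pos hratio (pow_pos hθ.1 2), mul_lt_one_of_nonneg_of_lt_one_right hratio_le
    (sq_nonneg θ) (pow_lt_one₀ hθ.1.le hθ.2 two_ne_zero)⟩

theorem statement3_general (hV : IsWiener V) (hν₁ : 0 < ν₁) (hVb : PotentialBounds V ν₁ ν₂)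
    (hθ : θ ∈ Set.Ioo (0 : ℝ) 1) (hf : ∀ i, memHs (-1) (f i))
    (hU : ∀ i, IsWeakSolution V (f i) (U i))
    {𝔾 δ𝔾 : ℕ → Set (Idx d)} {Us : ℕ → Fin N → Coeff d}
    (hUs0 : ∀ i, Us 0 i ∈ pwSpace (𝔾 0) ∧ memHs 1 (Us 0 i))
    (hδ𝔾 : ∀ n, δ𝔾 n = -δ𝔾 n)
    (hmark : ∀ n, θ * √(∑ i, eta Set.univ (rbar V (f i) (Us n i)) ^ 2) ≤
      √(∑ i, eta (δ𝔾 n) (rbar V (f i) (Us n i)) ^ 2))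
    (hstep : ∀ n, 𝔾 n ∪ δ𝔾 n ⊆ 𝔾 (n + 1))
    (hGal : ∀ n i, IsGalerkinSolution V (𝔾 (n + 1)) (f i) (Us (n + 1) i)) :
    √(1 - min ν₁ 1 / max ν₂ 1 * θ ^ 2) ∈ Set.Ioo (0 : ℝ) 1 ∧
      ∀ n, aNormT V (U - Us (n + 1)) ≤
        √(1 - min ν₁ 1 / max ν₂ 1 * θ ^ 2) * aNormT V (U - Us n) := by
  have hρ := sqrt_one_sub_mem_Ioo (min_div_max_mul_sq_mem_Ioo hν₁ ν₂ hθ)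
  have hUs (n : ℕ) (i : Fin N) : Us n i ∈ pwSpace (𝔾 n) ∧ memHs 1 (Us n i) := by
    cases n with
    | zero => exact hUs0 i
    | succ n => exact ⟨(hGal n i).1, (hGal n i).2.1⟩
  refine ⟨hρ, fun n => ?_⟩
  obtain ⟨h𝔾, hδ⟩ := Set.union_subset_iff.mp (hstep n)
  refine le_of_sq_le_sq ?_ (mul_nonneg hρ.1.le (Real.sqrt_nonneg _))
  rw [mul_pow, Real.sq_sqrt (Real.sqrt_pos.mp hρ.1).le]
  exact aNormT_sub_sq_le hV hν₁.le hVb hf hU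
    (fun i => ⟨pwSpace_mono h𝔾 (hUs n i).1, (hUs n i).2⟩) (hGal n) (hδ𝔾 n) hδ hθ.1.le (hmark n)

end Adaptive

/-- Theorem 2.4: the adaptive planewave algorithm for the source
system (Dörfler marking with parameter `θ`) contracts the energy error with rate
`ρ = √(1 − (α_*/α^*)θ²) ∈ (0,1)`. -/
theorem statement3 (d N : ℕ) (hd : 1 ≤ d) (V : Coeff d) (σ ν₁ ν₂ : ℝ)
    (hσ : (d : ℝ) / 2 < σ) (hV : memHs σ V) (hν₁ : 0 < ν₁) (hν₁₂ : ν₁ ≤ ν₂)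
    (hVb : PotentialBounds V ν₁ ν₂)
    (θ : ℝ) (hθ : θ ∈ Set.Ioo (0 : ℝ) 1)
    (f U : Fin N → Coeff d) (hf : ∀ i, memHs 0 (f i))
    (hU : ∀ i, memHs 1 (U i) ∧ ∀ v, memHs 1 v → aForm V (U i) v = l2inner (f i) v)
    (𝔾 δ𝔾 : ℕ → Set (Idx d)) (Us : ℕ → Fin N → Coeff d)
    (h𝔾0 : 𝔾 0 = ∅) (hUs0 : Us 0 = 0)
    (hmark : ∀ n, δ𝔾 n ⊆ (𝔾 n)ᶜ ∧ δ𝔾 n = -(δ𝔾 n) ∧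
      θ * Real.sqrt (∑ i, (eta Set.univ (rbar V (f i) (Us n i))) ^ 2) ≤
        Real.sqrt (∑ i, (eta (δ𝔾 n) (rbar V (f i) (Us n i))) ^ 2))
    (hstep : ∀ n, 𝔾 (n + 1) = 𝔾 n ∪ δ𝔾 n)
    (hGal : ∀ n i, Us (n + 1) i ∈ pwSpace (𝔾 (n + 1)) ∧ memHs 1 (Us (n + 1) i) ∧
      ∀ v ∈ pwSpace (𝔾 (n + 1)), memHs 1 v →
        aForm V (Us (n + 1) i) v = l2inner (f i) v) :
    Real.sqrt (1 - min ν₁ 1 / max ν₂ 1 * θ ^ 2) ∈ Set.Ioo (0 : ℝ) 1 ∧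
      ∀ n, aNormT V (U - Us (n + 1)) ≤
        Real.sqrt (1 - min ν₁ 1 / max ν₂ 1 * θ ^ 2) * aNormT V (U - Us n) := by
  exact statement3_general (hV.isWiener hσ) hν₁ hVb hθ (fun i => (hf i).mono (by norm_num)) hU
    (fun i => hUs0 ▸ ⟨fun _ _ => rfl, (sobolev d 1).zero_mem⟩) (fun n => (hmark n).2.1)
    (fun n => (hmark n).2.2) (fun n => (hstep n).ge) hGal

end APW
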